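/- Let q ∈ 𝒫 with 1 < q⁻ ≤ q⁺ < ∞ and let α : ℝⁿ → ℝ be measurable. Then for every double sequence of complex numbers λ = {λ_{v,m}}_{v∈ℕ₀,m∈ℤⁿ} one has ‖λ‖_{b̃^{−α(·),q'(·)}_{q'(·),q'(·)}} ≤ ‖λ‖'_{b̃^{−α(·),q'(·)}_{q'(·),q'(·)}} ≤ 2 ‖λ‖_{b̃^{−α(·),q'(·)}_{q'(·),q'(·)}}. -/

import Mathlib

/-!
The upper bound is Young's inequality `ab ≤ a^{q'} + b^q`, applied at almost every point and every
level to the weighted terms `2^{v(-α+n/2)} |λ| / μ` and `2^{v(α-n/2)} |s| / ν`, whose weights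
cancel in the product (`young_scaled`, `coefFn_mul_starFn`). Integrating over `P` gives
`2 μ ν` for all `μ > ‖λ‖` and `ν > 1`.

For the lower bound, fix `0 < μ < ∞` with `‖λ‖' ≤ μ`; the claim is that the modular of `λ / μ` over
every cube is at most one. The density `(2^{v(-α+n/2)} |λ| / μ)^{q'}` is cut off to levels below
`K` and to values at most `K` (`cutDens`), so that the supremum `M` of its modulars over all cubes
is finite. The dual choice of `s` (`testSeq`), divided by a constant `c ≥ 1`, has modulars at most
`c^{-qm} M` on *all* cubes simultaneously and pairs with `λ` over `P` to `μ / c` times the modular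
on `P`. If `M > 1`, then `c = M^{1/qm}` makes `s` admissible and `‖λ‖' ≤ μ` forces
`M ≤ c = M^{1/qm}`, a contradiction (`cutModular_le_one`). The cut-off is removed by monotone
convergence in `K`.

At each level the dyadic cubes partition space, so sums over `m` reduce to the term indexed by
`cubeIdx n v x` (`tsum_cube`).
-/

noncomputable section
open MeasureTheory ENNReal Set
open scoped ENNReal

abbrev Rn (n : ℕ) := EuclideanSpace ℝ (Fin n)

/-- The dyadic cube `Q_{v,m}` (with `v ∈ ℕ₀`, so `|Q_{v,m}| = 2^{-vn} ≤ 1`). -/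
def dyadicCube (n : ℕ) (v : ℕ) (m : Fin n → ℤ) : Set (Rn n) :=
  {x | ∀ i, (m i : ℝ) ≤ 2 ^ v * x i ∧ 2 ^ v * x i < m i + 1}

/-- The variable-exponent modular `ϱ_{p(·)}`. -/
def modularVE (n : ℕ) (p : Rn n → ℝ) (f : Rn n → ℝ≥0∞) : ℝ≥0∞ :=
  ∫⁻ x, f x ^ p x

/-- The Luxemburg norm `‖·‖_{p(·)}`. -/
def luxNorm (n : ℕ) (p : Rn n → ℝ) (f : Rn n → ℝ≥0∞) : ℝ≥0∞ :=
  sInf {μ : ℝ≥0∞ | 0 < μ ∧ modularVE n p (fun x => f x / μ) ≤ 1}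

/-- The sequence space norm `‖λ‖_{b̃^{β(·),r(·)}_{r(·),r(·)}}`; here `|P|^{-1} = 2^{vP·n}`. -/
def btNorm (n : ℕ) (r β : Rn n → ℝ) (lam : ℕ → (Fin n → ℤ) → ℂ) : ℝ≥0∞ :=
  ⨆ (vP : ℕ) (m0 : Fin n → ℤ),
    luxNorm n r ((dyadicCube n vP m0).indicator fun x =>
      ((2 : ℝ≥0∞) ^ ((vP : ℝ) * n) *
        ∑' (v : ℕ), ∑' (m : Fin n → ℤ),
          (if vP ≤ v then (1 : ℝ≥0∞) else 0) *
            (2 : ℝ≥0∞) ^ ((v : ℝ) * (β x + n / 2) * r x) *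
              ENNReal.ofReal ‖lam v m‖ ^ r x *
                (dyadicCube n v m).indicator (fun _ => (1 : ℝ≥0∞)) x) ^ (1 / r x))

/-- The norm `‖s‖* = ‖s‖^⋆_{b̃^{α(·)-n,q(·)}_{q(·),q(·)}}` of a sequence of functions
`s = {s_{v,m}}`:
`sup_P ‖ x ↦ ( |P|^{-1} Σ_{v≥v_P} (Σ_m 2^{v(α(x)-n/2)}|s_{v,m}(x)| χ_{v,m}(x))^{q(x)} )^{1/q(x)} χ_P ‖_{q(·)}`. -/
def starNorm (n : ℕ) (q α : Rn n → ℝ) (s : ℕ → (Fin n → ℤ) → Rn n → ℂ) : ℝ≥0∞ :=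
  ⨆ (vP : ℕ) (m0 : Fin n → ℤ),
    luxNorm n q ((dyadicCube n vP m0).indicator fun x =>
      ((2 : ℝ≥0∞) ^ ((vP : ℝ) * n) *
        ∑' (v : ℕ), (if vP ≤ v then (1 : ℝ≥0∞) else 0) *
          (∑' (m : Fin n → ℤ),
            (2 : ℝ≥0∞) ^ ((v : ℝ) * (α x - n / 2)) * ENNReal.ofReal ‖s v m x‖ *
              (dyadicCube n v m).indicator (fun _ => (1 : ℝ≥0∞)) x) ^ q x) ^ (1 / q x))

/-- The conjugate norm `‖λ‖'_{b̃^{-α(·),q'(·)}_{q'(·),q'(·)}}`: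
`sup |∫_P |P|^{-1} Σ_{v≥v_P} Σ_m λ_{v,m} s_{v,m}(x) χ_{v,m}(x) dx|`, the supremum over all
dyadic cubes `P` with `|P| ≤ 1` and all measurable sequences `s` with `‖s‖* ≤ 1`. -/
def conjNorm (n : ℕ) (q α : Rn n → ℝ) (lam : ℕ → (Fin n → ℤ) → ℂ) : ℝ≥0∞ :=
  ⨆ (vP : ℕ) (m0 : Fin n → ℤ) (s : ℕ → (Fin n → ℤ) → Rn n → ℂ)
    (_ : (∀ v m, Measurable (s v m)) ∧ starNorm n q α s ≤ 1),
    ENNReal.ofReal ‖∫ x in dyadicCube n vP m0,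
      ((2 : ℂ) ^ (vP * n) *
        ∑' (v : ℕ), ∑' (m : Fin n → ℤ),
          (if vP ≤ v then (1 : ℂ) else 0) * lam v m * s v m x *
            (dyadicCube n v m).indicator (fun _ => (1 : ℂ)) x)‖

/-- `∫_P |P|^{-1} Σ_{v≥v_P} Σ_m 2^{v(-α(x)+n/2)q'(x)} |λ_{v,m}|^{q'(x)} χ_{v,m}(x) dx`,
where `q'` is the pointwise conjugate exponent of `q`. -/
def dualModular (n : ℕ) (q α : Rn n → ℝ) (lam : ℕ → (Fin n → ℤ) → ℂ)
    (vP : ℕ) (m0 : Fin n → ℤ) : ℝ≥0∞ :=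
  ∫⁻ x in dyadicCube n vP m0,
    (2 : ℝ≥0∞) ^ ((vP : ℝ) * n) *
      ∑' (v : ℕ), ∑' (m : Fin n → ℤ),
        (if vP ≤ v then (1 : ℝ≥0∞) else 0) *
          (2 : ℝ≥0∞) ^ ((v : ℝ) * (-α x + n / 2) * (q x / (q x - 1))) *
            ENNReal.ofReal ‖lam v m‖ ^ (q x / (q x - 1)) *
              (dyadicCube n v m).indicator (fun _ => (1 : ℝ≥0∞)) x

/-! ### Dyadic cubes -/

/-- The index `m` of the unique dyadic cube `Q_{v,m}` of level `v` containing `x`. -/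
def cubeIdx (n : ℕ) (v : ℕ) (x : Rn n) : Fin n → ℤ := fun i => ⌊(2 : ℝ) ^ v * x i⌋

lemma mem_dyadicCube_iff {n v : ℕ} {m : Fin n → ℤ} {x : Rn n} :
    x ∈ dyadicCube n v m ↔ m = cubeIdx n v x := by
  simp only [dyadicCube, mem_ofPred_eq, funext_iff, cubeIdx, eq_comm (b := ⌊_⌋), Int.floor_eq_iff]

lemma measurable_cubeIdx (n v : ℕ) : Measurable (cubeIdx n v) := by
  unfold cubeIdx
  fun_prop

lemma measurableSet_dyadicCube (n v : ℕ) (m : Fin n → ℤ) :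
    MeasurableSet (dyadicCube n v m) := by
  have : dyadicCube n v m = cubeIdx n v ⁻¹' {m} := by
    ext x
    simp [mem_dyadicCube_iff, eq_comm]
  rw [this]
  exact measurable_cubeIdx n v (measurableSet_singleton m)

lemma volume_dyadicCube (n v : ℕ) (m : Fin n → ℤ) :
    (2 : ℝ≥0∞) ^ ((v : ℝ) * n) * volume (dyadicCube n v m) = 1 := by
  have h : dyadicCube n v m = (WithLp.ofLp : Rn n → Fin n → ℝ) ⁻¹'
      (Set.univ.pi fun i => Set.Ico ((m i : ℝ) / 2 ^ v) ((m i + 1 : ℝ) / 2 ^ v)) := by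
    ext x
    have h2 : (0 : ℝ) < 2 ^ v := by positivity
    simp only [dyadicCube, mem_ofPred_eq, mem_preimage, mem_pi, mem_univ, true_imp_iff, mem_Ico,
      div_le_iff₀ h2, lt_div_iff₀ h2, mul_comm]
  rw [h, (PiLp.volume_preserving_ofLp (Fin n)).measure_preimage
    (MeasurableSet.univ_pi fun _ => measurableSet_Ico).nullMeasurableSet, Real.volume_pi_Ico]
  have h3 : ∀ i : Fin n, ENNReal.ofReal ((m i + 1 : ℝ) / 2 ^ v - (m i : ℝ) / 2 ^ v)
      = ((2 : ℝ≥0∞) ^ v)⁻¹ := by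
    intro i
    rw [← sub_div, add_sub_cancel_left, one_div, ENNReal.ofReal_inv_of_pos (by positivity),
      ENNReal.ofReal_pow (by norm_num)]
    simp
  simp only [h3, Finset.prod_const, Finset.card_univ, Fintype.card_fin]
  rw [ENNReal.rpow_mul, ENNReal.rpow_natCast, ENNReal.rpow_natCast, ← mul_pow,
    ENNReal.mul_inv_cancel (by positivity) (by finiteness), one_pow]

/-- The cubes of one level partition space, so a sum over them has one nonzero term. -/
lemma tsum_cube {R : Type*} [Semiring R] [TopologicalSpace R] (n v : ℕ)
    (g : (Fin n → ℤ) → R) (x : Rn n) :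
    ∑' m, g m * (dyadicCube n v m).indicator (fun _ => (1 : R)) x = g (cubeIdx n v x) := by
  rw [tsum_eq_single (cubeIdx n v x)]
  · rw [indicator_of_mem (mem_dyadicCube_iff.2 rfl), mul_one]
  · intro m hm
    rw [indicator_of_notMem (fun h => hm (mem_dyadicCube_iff.1 h)), mul_zero]

lemma measurable_at_cubeIdx {n v : ℕ} {g : (Fin n → ℤ) → Rn n → ℝ}
    (hg : ∀ m, Measurable (g m)) : Measurable fun x => g (cubeIdx n v x) x :=
  (measurable_from_prod_countable_right (f := fun p : (Fin n → ℤ) × Rn n => g p.1 p.2) hg).comp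
    ((measurable_cubeIdx n v).prodMk measurable_id)

/-! ### The Luxemburg norm and the level sums -/

/-- The normalised tail sum `|P|⁻¹ Σ_{v ≥ v_P} u_v(x)` for a cube `P` of level `vP`. -/
def tailSum (n vP : ℕ) (u : ℕ → Rn n → ℝ≥0∞) (x : Rn n) : ℝ≥0∞ :=
  (2 : ℝ≥0∞) ^ ((vP : ℝ) * n) * ∑' v : ℕ, (if vP ≤ v then (1 : ℝ≥0∞) else 0) * u v x

lemma tailSum_mono {n vP : ℕ} {u w : ℕ → Rn n → ℝ≥0∞} {x : Rn n} (h : ∀ v, u v x ≤ w v x) :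
    tailSum n vP u x ≤ tailSum n vP w x := by
  unfold tailSum
  gcongr with v
  exact h v

lemma tailSum_mul (n vP : ℕ) (u : ℕ → Rn n → ℝ≥0∞) (c : ℝ≥0∞) (x : Rn n) :
    tailSum n vP (fun v x => u v x * c) x = tailSum n vP u x * c := by
  simp only [tailSum, ← mul_assoc, ENNReal.tsum_mul_right]

lemma tailSum_add (n vP : ℕ) (u w : ℕ → Rn n → ℝ≥0∞) (x : Rn n) :
    tailSum n vP (fun v x => u v x + w v x) x = tailSum n vP u x + tailSum n vP w x := by
  simp only [tailSum, mul_add, ENNReal.tsum_add]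

lemma measurable_tailSum {n vP : ℕ} {u : ℕ → Rn n → ℝ≥0∞} (h : ∀ v, Measurable (u v)) :
    Measurable (tailSum n vP u) := by
  unfold tailSum
  refine Measurable.const_mul (Measurable.tsum fun v => (h v).const_mul _) _

lemma luxNorm_le {n : ℕ} {p : Rn n → ℝ} {f : Rn n → ℝ≥0∞} {μ : ℝ≥0∞} (h0 : 0 < μ)
    (h : modularVE n p (fun x => f x / μ) ≤ 1) : luxNorm n p f ≤ μ :=
  sInf_le ⟨h0, h⟩

lemma modular_le_of_luxNorm_lt {n : ℕ} {p : Rn n → ℝ} (hp : ∀ x, 0 ≤ p x)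
    {f : Rn n → ℝ≥0∞} {μ : ℝ≥0∞} (h : luxNorm n p f < μ) :
    modularVE n p (fun x => f x / μ) ≤ 1 := by
  obtain ⟨κ, ⟨-, hκ⟩, hlt⟩ := sInf_lt_iff.1 h
  refine le_trans (lintegral_mono fun x => ?_) hκ
  exact ENNReal.rpow_le_rpow (ENNReal.div_le_div_left hlt.le _) (hp x)

/-- The outer root in the mixed norms is undone by the modular. -/
lemma modular_tail {n vP : ℕ} {m0 : Fin n → ℤ} {p : Rn n → ℝ}
    (hp : ∀ᵐ x ∂(volume : Measure (Rn n)), 0 < p x) (u : ℕ → Rn n → ℝ≥0∞) (μ : ℝ≥0∞) :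
    modularVE n p (fun x => (dyadicCube n vP m0).indicator
      (fun x => tailSum n vP (fun v x => u v x ^ p x) x ^ (1 / p x)) x / μ)
      = ∫⁻ x in dyadicCube n vP m0, tailSum n vP (fun v x => (u v x / μ) ^ p x) x := by
  rw [modularVE, ← lintegral_indicator (measurableSet_dyadicCube _ _ _)]
  refine lintegral_congr_ae ?_
  filter_upwards [hp] with x hx
  by_cases hxP : x ∈ dyadicCube n vP m0
  · simp only [indicator_of_mem hxP]
    have h1 : tailSum n vP (fun v x => (u v x / μ) ^ p x) x
        = tailSum n vP (fun v x => u v x ^ p x) x * (μ ^ p x)⁻¹ := by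
      rw [← tailSum_mul]
      simp only [tailSum, ENNReal.div_rpow_of_nonneg _ _ hx.le, ← div_eq_mul_inv]
    rw [h1, ENNReal.div_rpow_of_nonneg _ _ hx.le, ← ENNReal.rpow_mul, one_div_mul_cancel hx.ne',
      ENNReal.rpow_one, div_eq_mul_inv]
  · simp [indicator_of_notMem hxP, hx]

/-- The weighted coefficient `2^{v(β(x)+n/2)} |λ_{v,m}|` of the cube of level `v` containing `x`. -/
def coefFn (n : ℕ) (β : Rn n → ℝ) (lam : ℕ → (Fin n → ℤ) → ℂ) (v : ℕ) (x : Rn n) : ℝ≥0∞ :=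
  (2 : ℝ≥0∞) ^ ((v : ℝ) * (β x + n / 2)) * ENNReal.ofReal ‖lam v (cubeIdx n v x)‖

/-- The weighted value `2^{v(α(x)-n/2)} |s_{v,m}(x)|` for the cube of level `v` containing `x`. -/
def starFn (n : ℕ) (α : Rn n → ℝ) (s : ℕ → (Fin n → ℤ) → Rn n → ℂ) (v : ℕ) (x : Rn n) : ℝ≥0∞ :=
  (2 : ℝ≥0∞) ^ ((v : ℝ) * (α x - n / 2)) * ENNReal.ofReal ‖s v (cubeIdx n v x) x‖

lemma btNorm_eq (n : ℕ) (r β : Rn n → ℝ) (hr : ∀ x, 0 ≤ r x) (lam : ℕ → (Fin n → ℤ) → ℂ) :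
    btNorm n r β lam = ⨆ (vP : ℕ) (m0 : Fin n → ℤ),
      luxNorm n r ((dyadicCube n vP m0).indicator fun x =>
        tailSum n vP (fun v x => coefFn n β lam v x ^ r x) x ^ (1 / r x)) := by
  unfold btNorm tailSum coefFn
  simp only [tsum_cube]
  simp only [ENNReal.mul_rpow_of_nonneg _ _ (hr _),
    ← ENNReal.rpow_mul, mul_assoc]

lemma starNorm_eq (n : ℕ) (q α : Rn n → ℝ) (s : ℕ → (Fin n → ℤ) → Rn n → ℂ) :
    starNorm n q α s = ⨆ (vP : ℕ) (m0 : Fin n → ℤ),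
      luxNorm n q ((dyadicCube n vP m0).indicator fun x =>
        tailSum n vP (fun v x => starFn n α s v x ^ q x) x ^ (1 / q x)) := by
  unfold starNorm tailSum starFn
  simp only [tsum_cube]

lemma conjNorm_integrand_eq (n vP : ℕ) (lam : ℕ → (Fin n → ℤ) → ℂ)
    (s : ℕ → (Fin n → ℤ) → Rn n → ℂ) (x : Rn n) :
    ((2 : ℂ) ^ (vP * n) * ∑' (v : ℕ), ∑' (m : Fin n → ℤ),
      (if vP ≤ v then (1 : ℂ) else 0) * lam v m * s v m x *
        (dyadicCube n v m).indicator (fun _ => (1 : ℂ)) x)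
    = (2 : ℂ) ^ (vP * n) * ∑' (v : ℕ), (if vP ≤ v then (1 : ℂ) else 0) *
        (lam v (cubeIdx n v x) * s v (cubeIdx n v x) x) := by
  simp only [tsum_cube]
  simp only [mul_assoc]

/-! ### The upper bound -/

lemma coefFn_mul_starFn (n : ℕ) (α : Rn n → ℝ) (lam : ℕ → (Fin n → ℤ) → ℂ)
    (s : ℕ → (Fin n → ℤ) → Rn n → ℂ) (v : ℕ) (x : Rn n) :
    coefFn n (fun x => -α x) lam v x * starFn n α s v x
      = ‖lam v (cubeIdx n v x)‖ₑ * ‖s v (cubeIdx n v x) x‖ₑ := by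
  have h : (2 : ℝ≥0∞) ^ ((v : ℝ) * (-α x + n / 2)) * (2 : ℝ≥0∞) ^ ((v : ℝ) * (α x - n / 2)) = 1 := by
    rw [← ENNReal.rpow_add _ _ (by norm_num) (by norm_num)]
    convert ENNReal.rpow_zero using 2
    ring
  rw [coefFn, starFn, mul_mul_mul_comm, h, one_mul, ofReal_norm, ofReal_norm]

lemma measurable_coefFn {n : ℕ} {β : Rn n → ℝ} (hβ : Measurable β)
    (lam : ℕ → (Fin n → ℤ) → ℂ) (v : ℕ) : Measurable (coefFn n β lam v) := by
  unfold coefFn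
  refine Measurable.mul (by fun_prop) (ENNReal.measurable_ofReal.comp ?_)
  exact measurable_at_cubeIdx (g := fun m _ => ‖lam v m‖) fun m => measurable_const

lemma young_scaled {a b μ ν : ℝ≥0∞} {p r : ℝ} (h : p.HolderConjugate r) (hμ : μ ≠ 0) (hμ' : μ ≠ ∞)
    (hν : ν ≠ 0) (hν' : ν ≠ ∞) : a * b ≤ ((a / μ) ^ r + (b / ν) ^ p) * (μ * ν) := by
  calc a * b = (a / μ * (b / ν)) * (μ * ν) := by
        rw [mul_mul_mul_comm, ENNReal.div_mul_cancel hμ hμ', ENNReal.div_mul_cancel hν hν']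
    _ ≤ _ := by
        gcongr
        refine (ENNReal.young_inequality _ _ h.symm).trans ?_
        gcongr
        · exact ENNReal.div_le_of_le_mul (le_mul_of_one_le_right zero_le
            (by simpa using h.symm.lt.le))
        · exact ENNReal.div_le_of_le_mul (le_mul_of_one_le_right zero_le (by simpa using h.lt.le))

lemma conjNorm_le (n : ℕ) (q α : Rn n → ℝ) (hqmeas : Measurable q) (hαmeas : Measurable α)
    (hq1 : ∀ x, 1 ≤ q x) (hq : ∀ᵐ x ∂(volume : Measure (Rn n)), 1 < q x)
    (lam : ℕ → (Fin n → ℤ) → ℂ) :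
    conjNorm n q α lam ≤ 2 * btNorm n (fun x => q x / (q x - 1)) (fun x => -α x) lam := by
  set N := btNorm n (fun x => q x / (q x - 1)) (fun x => -α x) lam with hN
  have hr : ∀ x, 0 ≤ q x / (q x - 1) := fun x =>
    div_nonneg (by linarith [hq1 x]) (by linarith [hq1 x])
  have hr' : ∀ᵐ x ∂(volume : Measure (Rn n)), 0 < q x / (q x - 1) := by
    filter_upwards [hq] with x hx
    exact div_pos (by linarith) (by linarith)
  rcases eq_or_ne N ∞ with hT | hT
  · simp [hT]
  refine iSup_le fun vP => iSup_le fun m0 => iSup_le fun s => iSup_le fun ⟨_, hs⟩ => ?_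
  rw [mul_comm 2 N, ← ENNReal.div_le_iff two_ne_zero ENNReal.ofNat_ne_top, ← mul_one N]
  refine ENNReal.le_mul_of_forall_lt (.inr ENNReal.one_ne_top) (.inl hT) fun μ hμ ν hν => ?_
  have hμ0 : μ ≠ 0 := (zero_le.trans_lt hμ).ne'
  have hν0 : ν ≠ 0 := (zero_le.trans_lt hν).ne'
  rcases eq_or_ne μ ∞ with hμT | hμT
  · simp [hμT, ENNReal.top_mul hν0]
  rcases eq_or_ne ν ∞ with hνT | hνT
  · simp [hνT, ENNReal.mul_top hμ0]
  rw [ENNReal.div_le_iff two_ne_zero ENNReal.ofNat_ne_top]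
  have hA : ∫⁻ x in dyadicCube n vP m0, tailSum n vP
      (fun v x => (coefFn n (fun x => -α x) lam v x / μ) ^ (q x / (q x - 1))) x ≤ 1 := by
    rw [← modular_tail hr']
    refine modular_le_of_luxNorm_lt hr (lt_of_le_of_lt ?_ hμ)
    rw [hN, btNorm_eq _ _ _ hr]
    exact le_iSup₂_of_le vP m0 le_rfl
  have hB : ∫⁻ x in dyadicCube n vP m0, tailSum n vP
      (fun v x => (starFn n α s v x / ν) ^ q x) x ≤ 1 := by
    rw [← modular_tail (hq.mono fun x hx => by linarith)]
    refine modular_le_of_luxNorm_lt (fun x => by linarith [hq1 x]) (lt_of_le_of_lt ?_ hν)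
    rw [starNorm_eq] at hs
    refine le_trans ?_ hs
    exact le_iSup₂_of_le vP m0 le_rfl
  rw [ofReal_norm]
  simp only [conjNorm_integrand_eq]
  refine (enorm_integral_le_lintegral_enorm _).trans ?_
  have hpt : ∀ᵐ x ∂(volume.restrict (dyadicCube n vP m0)),
      ‖(2 : ℂ) ^ (vP * n) * ∑' (v : ℕ), (if vP ≤ v then (1 : ℂ) else 0) *
        (lam v (cubeIdx n v x) * s v (cubeIdx n v x) x)‖ₑ ≤
      (tailSum n vP (fun v x =>
          (coefFn n (fun x => -α x) lam v x / μ) ^ (q x / (q x - 1))) x +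
        tailSum n vP (fun v x => (starFn n α s v x / ν) ^ q x) x) * (μ * ν) := by
    filter_upwards [ae_restrict_of_ae hq] with x hx
    rw [← tailSum_add, ← tailSum_mul n vP _ (μ * ν) x]
    calc _ ≤ tailSum n vP (fun v x => ‖lam v (cubeIdx n v x)‖ₑ * ‖s v (cubeIdx n v x) x‖ₑ) x := by
          rw [enorm_mul, tailSum]
          gcongr
          · rw [enorm_pow, ← Nat.cast_mul, ENNReal.rpow_natCast]
            gcongr
            rw [← ofReal_norm]
            simp
          · refine enorm_tsum_le_tsum_enorm.trans (ENNReal.tsum_le_tsum fun v => ?_)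
            rw [enorm_mul, enorm_mul]
            split_ifs <;> simp
      _ ≤ _ := by
          refine tailSum_mono fun v => ?_
          rw [← coefFn_mul_starFn n α]
          exact young_scaled ((Real.holderConjugate_iff_eq_conjExponent hx).2 rfl) hμ0 hμT hν0 hνT
  refine (lintegral_mono_ae hpt).trans ?_
  rw [lintegral_mul_const' _ _ (ENNReal.mul_ne_top hμT hνT), lintegral_add_left]
  · calc _ ≤ (1 + 1) * (μ * ν) := by gcongr
      _ = μ * ν * 2 := by rw [one_add_one_eq_two, mul_comm]
  · have hm := measurable_coefFn hαmeas.neg lam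
    refine measurable_tailSum fun v => ?_
    exact Measurable.pow ((hm v).div_const μ) (by fun_prop)

/-! ### The lower bound -/

/-- The dual density `(2^{v(-α(x)+n/2)} |λ_{v,m}| / μ)^{q'(x)}`. -/
def dens (n : ℕ) (q α : Rn n → ℝ) (lam : ℕ → (Fin n → ℤ) → ℂ) (μ : ℝ)
    (v : ℕ) (m : Fin n → ℤ) (x : Rn n) : ℝ :=
  ((2 : ℝ) ^ ((v : ℝ) * (-α x + n / 2)) * ‖lam v m‖ / μ) ^ (q x / (q x - 1))

open Classical in
/-- The dual density, cut off to levels `v < K` and to values at most `K`. -/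
def cutDens (n : ℕ) (q α : Rn n → ℝ) (lam : ℕ → (Fin n → ℤ) → ℂ) (μ : ℝ) (K : ℕ)
    (v : ℕ) (m : Fin n → ℤ) (x : Rn n) : ℝ :=
  if v < K ∧ dens n q α lam μ v m x ≤ K then dens n q α lam μ v m x else 0

/-- The extremal test sequence: up to the constant `μ / c` it is `cutDens / λ`
(and `0` where `λ_{v,m} = 0`). -/
def testSeq (n : ℕ) (q α : Rn n → ℝ) (lam : ℕ → (Fin n → ℤ) → ℂ) (μ c : ℝ) (K : ℕ)
    (v : ℕ) (m : Fin n → ℤ) (x : Rn n) : ℂ :=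
  ((c⁻¹ * μ * cutDens n q α lam μ K v m x : ℝ) : ℂ) / lam v m

section LowerBound

variable {n : ℕ} {q α : Rn n → ℝ} {lam : ℕ → (Fin n → ℤ) → ℂ} {μ c : ℝ} {K v : ℕ}
  {m : Fin n → ℤ} {x : Rn n}

lemma dens_nonneg (hμ : 0 < μ) : 0 ≤ dens n q α lam μ v m x := by
  unfold dens
  positivity

lemma cutDens_nonneg (hμ : 0 < μ) : 0 ≤ cutDens n q α lam μ K v m x := by
  unfold cutDens
  split_ifs
  exacts [dens_nonneg hμ, le_rfl]

lemma cutDens_le : cutDens n q α lam μ K v m x ≤ K := by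
  unfold cutDens
  split_ifs with h
  exacts [h.2, Nat.cast_nonneg K]

lemma cutDens_eq_zero_of_le (h : K ≤ v) : cutDens n q α lam μ K v m x = 0 :=
  if_neg fun h' => absurd h'.1 h.not_gt

lemma cutDens_of_lam_eq_zero (hx : 1 < q x) (h : lam v m = 0) :
    cutDens n q α lam μ K v m x = 0 := by
  have : q x / (q x - 1) ≠ 0 := (div_pos (by linarith) (by linarith)).ne'
  simp [cutDens, dens, h, Real.zero_rpow this]

lemma measurable_dens (hq : Measurable q) (hα : Measurable α) (v : ℕ) (m : Fin n → ℤ) :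
    Measurable (dens n q α lam μ v m) := by
  unfold dens
  fun_prop

lemma measurable_cutDens (hq : Measurable q) (hα : Measurable α) (v : ℕ) (m : Fin n → ℤ) :
    Measurable (cutDens n q α lam μ K v m) := by
  unfold cutDens
  have h := measurable_dens (lam := lam) (μ := μ) hq hα v m
  refine Measurable.ite ?_ h measurable_const
  exact (MeasurableSet.const _).inter (measurableSet_le h measurable_const)

lemma measurable_testSeq (hq : Measurable q) (hα : Measurable α) (v : ℕ) (m : Fin n → ℤ) :
    Measurable (testSeq n q α lam μ c K v m) := by
  unfold testSeq
  have h := measurable_cutDens (lam := lam) (μ := μ) (K := K) hq hα v m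
  exact (Complex.measurable_ofReal.comp (h.const_mul _)).div_const _

lemma lam_mul_testSeq (hx : 1 < q x) :
    lam v m * testSeq n q α lam μ c K v m x
      = ((c⁻¹ * μ * cutDens n q α lam μ K v m x : ℝ) : ℂ) := by
  by_cases h : lam v m = 0
  · simp [h, cutDens_of_lam_eq_zero hx h]
  · rw [testSeq, mul_div_cancel₀ _ h]

/-- The choice of the power `q'` makes the `q`-th power of the weighted test sequence a multiple
of the dual density again. -/
lemma norm_testSeq_rpow (hx : 1 < q x) (hμ : 0 < μ) (hc : 0 < c) :
    ((2 : ℝ) ^ ((v : ℝ) * (α x - n / 2)) * ‖testSeq n q α lam μ c K v m x‖) ^ q x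
      = c ^ (-q x) * cutDens n q α lam μ K v m x := by
  have hq0 : q x ≠ 0 := by linarith
  by_cases h : lam v m = 0
  · simp [testSeq, h, cutDens_of_lam_eq_zero hx h, Real.zero_rpow hq0]
  have hl : 0 < ‖lam v m‖ := norm_pos_iff.2 h
  have hn : ‖testSeq n q α lam μ c K v m x‖
      = c⁻¹ * μ * cutDens n q α lam μ K v m x / ‖lam v m‖ := by
    rw [testSeq, norm_div, Complex.norm_real, Real.norm_of_nonneg]
    have := cutDens_nonneg (q := q) (α := α) (lam := lam) (K := K) (v := v) (m := m) (x := x) hμ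
    positivity
  rw [hn, cutDens]
  split_ifs with hcut
  · set a := (2 : ℝ) ^ ((v : ℝ) * (-α x + n / 2)) * ‖lam v m‖ / μ with ha
    have ha0 : 0 < a := by positivity
    have h2 : (2 : ℝ) ^ ((v : ℝ) * (α x - n / 2)) = ((2 : ℝ) ^ ((v : ℝ) * (-α x + n / 2)))⁻¹ := by
      rw [← Real.rpow_neg (by norm_num)]
      congr 1
      ring
    have h3 : (2 : ℝ) ^ ((v : ℝ) * (α x - n / 2)) *
        (c⁻¹ * μ * dens n q α lam μ v m x / ‖lam v m‖) = c⁻¹ * a ^ (q x / (q x - 1) - 1) := by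
      rw [h2, Real.rpow_sub ha0, Real.rpow_one, dens, ← ha]
      have ht : (0 : ℝ) < (2 : ℝ) ^ ((v : ℝ) * (-α x + n / 2)) := by positivity
      rw [show a ^ (q x / (q x - 1)) / a
        = a ^ (q x / (q x - 1)) * μ / (2 ^ ((v : ℝ) * (-α x + n / 2)) * ‖lam v m‖) by
          rw [ha]; field_simp]
      field_simp
    have h1 : q x - 1 ≠ 0 := by linarith
    rw [h3, Real.mul_rpow (by positivity) (by positivity), ← Real.rpow_mul ha0.le,
      Real.inv_rpow hc.le, ← Real.rpow_neg hc.le, dens, ← ha]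
    congr 2
    field_simp
    ring
  · simp [Real.zero_rpow hq0]

lemma starFn_testSeq_rpow (hx : 1 < q x) (hμ : 0 < μ) (hc : 0 < c) :
    starFn n α (testSeq n q α lam μ c K) v x ^ q x
      = ENNReal.ofReal (cutDens n q α lam μ K v (cubeIdx n v x) x) *
        ENNReal.ofReal (c ^ (-q x)) := by
  rw [← ENNReal.ofReal_mul (cutDens_nonneg hμ), mul_comm, ← norm_testSeq_rpow hx hμ hc,
    ← ENNReal.ofReal_rpow_of_nonneg (by positivity) (by linarith),
    ENNReal.ofReal_mul (by positivity), starFn, ← ENNReal.ofReal_rpow_of_pos (by norm_num)]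
  simp

lemma coefFn_div_rpow (hx : 1 < q x) (hμ : 0 < μ) :
    (coefFn n (fun x => -α x) lam v x / ENNReal.ofReal μ) ^ (q x / (q x - 1))
      = ENNReal.ofReal (dens n q α lam μ v (cubeIdx n v x) x) := by
  have : 0 < q x / (q x - 1) := div_pos (by linarith) (by linarith)
  rw [dens, ← ENNReal.ofReal_rpow_of_nonneg (by positivity) this.le,
    ENNReal.ofReal_div_of_pos hμ, ENNReal.ofReal_mul (by positivity), coefFn,
    ← ENNReal.ofReal_rpow_of_pos (by norm_num)]
  simp

variable (n q α lam μ K) in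
/-- The truncated dual modular density at level `v`, evaluated in the cube containing `x`. -/
def cutFn (v : ℕ) (x : Rn n) : ℝ≥0∞ :=
  ENNReal.ofReal (cutDens n q α lam μ K v (cubeIdx n v x) x)

lemma measurable_cutFn (hq : Measurable q) (hα : Measurable α) (v : ℕ) :
    Measurable (cutFn n q α lam μ K v) :=
  ENNReal.measurable_ofReal.comp
    (measurable_at_cubeIdx fun m => measurable_cutDens hq hα v m)

lemma cutFn_eq_zero_of_le (h : K ≤ v) : cutFn n q α lam μ K v x = 0 := by
  simp [cutFn, cutDens_eq_zero_of_le h]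

lemma tailSum_cutFn_eq (vP : ℕ) :
    tailSum n vP (cutFn n q α lam μ K) x = (2 : ℝ≥0∞) ^ ((vP : ℝ) * n) *
      ∑ v ∈ Finset.range K, (if vP ≤ v then (1 : ℝ≥0∞) else 0) * cutFn n q α lam μ K v x := by
  rw [tailSum, tsum_eq_sum]
  intro v hv
  rw [cutFn_eq_zero_of_le (by simpa using hv), mul_zero]

variable (n q α lam μ K) in
/-- The modular of the truncated dual density on the dyadic cube `Q_{vP,m0}`. -/
def cutModular (vP : ℕ) (m0 : Fin n → ℤ) : ℝ≥0∞ :=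
  ∫⁻ x in dyadicCube n vP m0, tailSum n vP (cutFn n q α lam μ K) x

lemma tailSum_cutFn_le (vP : ℕ) :
    tailSum n vP (cutFn n q α lam μ K) x ≤ (K * K : ℝ≥0∞) * (2 : ℝ≥0∞) ^ ((vP : ℝ) * n) := by
  rw [tailSum_cutFn_eq, mul_comm]
  gcongr
  calc _ ≤ ∑ v ∈ Finset.range K, (K : ℝ≥0∞) := by
        refine Finset.sum_le_sum fun v _ => ?_
        have : cutFn n q α lam μ K v x ≤ K := by
          rw [cutFn, ← ENNReal.ofReal_natCast]
          exact ENNReal.ofReal_le_ofReal cutDens_le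
        split_ifs <;> simp [this]
    _ = _ := by simp

lemma tailSum_cutFn_ne_top (vP : ℕ) : tailSum n vP (cutFn n q α lam μ K) x ≠ ∞ :=
  ne_top_of_le_ne_top (by finiteness) (tailSum_cutFn_le vP)

/-- The truncation makes the modulars uniformly bounded over all dyadic cubes. -/
lemma cutModular_le (vP : ℕ) (m0 : Fin n → ℤ) : cutModular n q α lam μ K vP m0 ≤ K * K := by
  calc _ ≤ ∫⁻ x in dyadicCube n vP m0, (K * K : ℝ≥0∞) * (2 : ℝ≥0∞) ^ ((vP : ℝ) * n) :=
        lintegral_mono fun x => tailSum_cutFn_le vP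
    _ = K * K := by rw [setLIntegral_const, mul_assoc, volume_dyadicCube, mul_one]

/-- The test sequence pairs with `λ` to a multiple of the truncated modular. -/
lemma ofReal_norm_pairing (hqmeas : Measurable q) (hαmeas : Measurable α)
    (hq : ∀ᵐ x ∂(volume : Measure (Rn n)), 1 < q x) (hμ : 0 < μ) (hc : 0 < c)
    (vP : ℕ) (m0 : Fin n → ℤ) :
    ENNReal.ofReal ‖∫ x in dyadicCube n vP m0,
      ((2 : ℂ) ^ (vP * n) *
        ∑' (v : ℕ), ∑' (m : Fin n → ℤ),
          (if vP ≤ v then (1 : ℂ) else 0) * lam v m * testSeq n q α lam μ c K v m x *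
            (dyadicCube n v m).indicator (fun _ => (1 : ℂ)) x)‖
      = ENNReal.ofReal (c⁻¹ * μ) * cutModular n q α lam μ K vP m0 := by
  simp only [conjNorm_integrand_eq]
  have hpt : ∀ᵐ x ∂(volume.restrict (dyadicCube n vP m0)),
      (2 : ℂ) ^ (vP * n) * ∑' (v : ℕ), (if vP ≤ v then (1 : ℂ) else 0) *
        (lam v (cubeIdx n v x) * testSeq n q α lam μ c K v (cubeIdx n v x) x) =
      ((c⁻¹ * μ * (tailSum n vP (cutFn n q α lam μ K) x).toReal : ℝ) : ℂ) := by
    filter_upwards [ae_restrict_of_ae hq] with x hx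
    simp only [lam_mul_testSeq hx]
    rw [tsum_eq_sum (s := Finset.range K), tailSum_cutFn_eq, ENNReal.toReal_mul,
      ENNReal.toReal_sum]
    · rw [← Nat.cast_mul, ENNReal.rpow_natCast, ENNReal.toReal_pow]
      push_cast
      rw [mul_left_comm, Finset.mul_sum (a := ((c : ℂ)⁻¹ * μ))]
      congr 1
      refine Finset.sum_congr rfl fun v _ => ?_
      rw [ENNReal.toReal_mul, cutFn, ENNReal.toReal_ofReal (cutDens_nonneg hμ)]
      split_ifs <;> simp
    · intro v _
      refine ENNReal.mul_ne_top ?_ ENNReal.ofReal_ne_top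
      split_ifs <;> simp
    · intro v hv
      rw [cutDens_eq_zero_of_le (by simpa using hv)]
      simp
  rw [integral_congr_ae hpt, integral_complex_ofReal, Complex.norm_real, integral_const_mul,
    integral_toReal (measurable_tailSum fun v => measurable_cutFn hqmeas hαmeas v).aemeasurable
      (Filter.Eventually.of_forall fun x => (tailSum_cutFn_ne_top vP).lt_top),
    Real.norm_of_nonneg (by positivity), ENNReal.ofReal_mul (by positivity), ENNReal.ofReal_toReal]
  · rfl
  · exact ne_top_of_le_ne_top (by finiteness) (cutModular_le (q := q) (α := α) vP m0)

/-- If `c ≥ 1` and all truncated modulars are at most `c ^ qm`, the test sequence is admissible. -/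
lemma starNorm_testSeq_le {qm : ℝ} (hqm : 1 < qm)
    (hq : ∀ᵐ x ∂(volume : Measure (Rn n)), qm ≤ q x) (hμ : 0 < μ) (hc : 1 ≤ c)
    (hM : ∀ vP m0, cutModular n q α lam μ K vP m0 ≤ ENNReal.ofReal (c ^ qm)) :
    starNorm n q α (testSeq n q α lam μ c K) ≤ 1 := by
  have hc0 : 0 < c := by linarith
  rw [starNorm_eq]
  refine iSup₂_le fun vP m0 => luxNorm_le one_pos ?_
  rw [modular_tail (hq.mono fun x hx => by linarith)]
  calc _ ≤ ∫⁻ x in dyadicCube n vP m0,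
          tailSum n vP (cutFn n q α lam μ K) x * ENNReal.ofReal (c ^ (-qm)) := by
        refine lintegral_mono_ae ?_
        filter_upwards [ae_restrict_of_ae hq] with x hx
        rw [← tailSum_mul n vP]
        refine tailSum_mono fun v => ?_
        rw [div_one, starFn_testSeq_rpow (by linarith) hμ hc0, cutFn]
        gcongr
    _ = cutModular n q α lam μ K vP m0 * ENNReal.ofReal (c ^ (-qm)) :=
        lintegral_mul_const' _ _ ENNReal.ofReal_ne_top
    _ ≤ ENNReal.ofReal (c ^ qm) * ENNReal.ofReal (c ^ (-qm)) := by
        gcongr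
        exact hM vP m0
    _ = 1 := by
        rw [← ENNReal.ofReal_mul (by positivity), ← Real.rpow_add hc0]
        simp

/-- Every truncated modular is at most one. If the supremum `M` of these modulars exceeded one,
testing with `c = M ^ (1 / qm)` would give `M ≤ M ^ (1 / qm)`, impossible for `1 < M < ∞`. -/
lemma cutModular_le_one (hqmeas : Measurable q) (hαmeas : Measurable α) (hq1 : ∀ x, 1 ≤ q x)
    {qm : ℝ} (hqm : 1 < qm) (hq : ∀ᵐ x ∂(volume : Measure (Rn n)), qm ≤ q x) (hμ : 0 < μ)
    (hN : conjNorm n q α lam ≤ ENNReal.ofReal μ) (vP : ℕ) (m0 : Fin n → ℤ) :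
    cutModular n q α lam μ K vP m0 ≤ 1 := by
  set M := ⨆ (vP : ℕ) (m0 : Fin n → ℤ), cutModular n q α lam μ K vP m0 with hMdef
  have hMle : ∀ vP m0, cutModular n q α lam μ K vP m0 ≤ M := fun vP m0 =>
    le_iSup₂_of_le vP m0 le_rfl
  refine (hMle vP m0).trans ?_
  by_contra! hlt
  have hMT : M ≠ ∞ := ne_top_of_le_ne_top (b := (K * K : ℝ≥0∞)) (by finiteness)
    (iSup₂_le fun vP m0 => cutModular_le vP m0)
  have hM1 : 1 < M.toReal := by
    rwa [← ENNReal.toReal_one, ENNReal.toReal_lt_toReal ENNReal.one_ne_top hMT]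
  set c := M.toReal ^ (1 / qm) with hcdef
  have hc : 1 ≤ c := Real.one_le_rpow hM1.le (by positivity)
  have hc0 : 0 < c := by linarith
  have hcq : c ^ qm = M.toReal := by
    rw [hcdef, ← Real.rpow_mul (by positivity), one_div_mul_cancel (by linarith), Real.rpow_one]
  have hs := starNorm_testSeq_le (c := c) hqm hq hμ hc (lam := lam) (K := K) (α := α)
    fun vP m0 => (hMle vP m0).trans (by rw [hcq, ENNReal.ofReal_toReal hMT])
  have hb : ∀ vP m0, cutModular n q α lam μ K vP m0 ≤ ENNReal.ofReal c := by
    intro vP m0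
    have h1 : ENNReal.ofReal (c⁻¹ * μ) * cutModular n q α lam μ K vP m0 ≤ ENNReal.ofReal μ := by
      rw [← ofReal_norm_pairing hqmeas hαmeas (hq.mono fun x hx => by linarith) hμ hc0]
      refine le_trans ?_ hN
      exact le_iSup₂_of_le vP m0 (le_iSup₂_of_le (testSeq n q α lam μ c K)
        ⟨fun v m => measurable_testSeq hqmeas hαmeas v m, hs⟩ le_rfl)
    have h2 : ENNReal.ofReal (c * μ⁻¹) * ENNReal.ofReal (c⁻¹ * μ) = 1 := by
      rw [← ENNReal.ofReal_mul (by positivity)]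
      field_simp
      simp
    calc _ = ENNReal.ofReal (c * μ⁻¹) *
          (ENNReal.ofReal (c⁻¹ * μ) * cutModular n q α lam μ K vP m0) := by
          rw [← mul_assoc, h2, one_mul]
      _ ≤ ENNReal.ofReal (c * μ⁻¹) * ENNReal.ofReal μ := by gcongr
      _ = ENNReal.ofReal c := by
          rw [← ENNReal.ofReal_mul (by positivity)]
          field_simp
  have hMc : M.toReal ≤ c := ENNReal.toReal_le_of_le_ofReal hc0.le (iSup₂_le hb)
  have : c < M.toReal := by
    conv_rhs => rw [← Real.rpow_one M.toReal]
    exact Real.rpow_lt_rpow_of_exponent_lt hM1 ((div_lt_one (by linarith)).2 hqm)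
  linarith

lemma monotone_cutFn (hμ : 0 < μ) : Monotone fun K => cutFn n q α lam μ K v x := by
  intro K L hKL
  refine ENNReal.ofReal_le_ofReal ?_
  by_cases h : v < K ∧ dens n q α lam μ v (cubeIdx n v x) x ≤ K
  · have hL : v < L ∧ dens n q α lam μ v (cubeIdx n v x) x ≤ L :=
      ⟨h.1.trans_le hKL, h.2.trans (by exact_mod_cast hKL)⟩
    rw [cutDens, cutDens, if_pos h, if_pos hL]
  · rw [cutDens, if_neg h]
    exact cutDens_nonneg hμ

lemma tailSum_dens_le_iSup (vP : ℕ) :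
    tailSum n vP (fun v x => ENNReal.ofReal (dens n q α lam μ v (cubeIdx n v x) x)) x
      ≤ ⨆ K, tailSum n vP (cutFn n q α lam μ K) x := by
  rw [tailSum, ENNReal.tsum_eq_iSup_nat, ENNReal.mul_iSup]
  refine iSup_le fun i => ?_
  obtain ⟨B, hB⟩ := ((Finset.range i).image
    (fun v => ⌈dens n q α lam μ v (cubeIdx n v x) x⌉₊)).exists_le
  refine le_iSup_of_le (max i B) ?_
  rw [tailSum]
  gcongr
  refine le_trans (Finset.sum_le_sum fun v hv => ?_) (ENNReal.sum_le_tsum (Finset.range i))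
  have hcut : v < max i B ∧ dens n q α lam μ v (cubeIdx n v x) x ≤ (max i B : ℕ) := by
    refine ⟨lt_max_of_lt_left (Finset.mem_range.1 hv), (Nat.le_ceil _).trans ?_⟩
    exact_mod_cast (hB _ (Finset.mem_image_of_mem _ hv)).trans (le_max_right _ _)
  rw [cutFn, cutDens, if_pos hcut]

lemma btNorm_le_ofReal (hqmeas : Measurable q) (hαmeas : Measurable α) (hq1 : ∀ x, 1 ≤ q x)
    {qm : ℝ} (hqm : 1 < qm) (hq : ∀ᵐ x ∂(volume : Measure (Rn n)), qm ≤ q x) (hμ : 0 < μ)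
    (hN : conjNorm n q α lam ≤ ENNReal.ofReal μ) :
    btNorm n (fun x => q x / (q x - 1)) (fun x => -α x) lam ≤ ENNReal.ofReal μ := by
  have hr : ∀ x, 0 ≤ q x / (q x - 1) := fun x =>
    div_nonneg (by linarith [hq1 x]) (by linarith [hq1 x])
  have hr' : ∀ᵐ x ∂(volume : Measure (Rn n)), 0 < q x / (q x - 1) := by
    filter_upwards [hq] with x hx
    exact div_pos (by linarith) (by linarith)
  rw [btNorm_eq _ _ _ hr]
  refine iSup₂_le fun vP m0 => luxNorm_le (ENNReal.ofReal_pos.2 hμ) ?_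
  rw [modular_tail hr']
  calc _ ≤ ∫⁻ x in dyadicCube n vP m0, ⨆ K, tailSum n vP (cutFn n q α lam μ K) x := by
        refine lintegral_mono_ae ?_
        filter_upwards [ae_restrict_of_ae hq] with x hx
        refine le_trans (tailSum_mono fun v => ?_) (tailSum_dens_le_iSup vP)
        exact (coefFn_div_rpow (by linarith) hμ).le
    _ = ⨆ K, cutModular n q α lam μ K vP m0 := by
        refine lintegral_iSup
          (fun K => measurable_tailSum fun v => measurable_cutFn hqmeas hαmeas v) ?_
        exact fun K L hKL x => tailSum_mono fun v => monotone_cutFn hμ hKL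
    _ ≤ 1 := iSup_le fun K => cutModular_le_one hqmeas hαmeas hq1 hqm hq hμ hN vP m0

end LowerBound

/-- let `q ∈ 𝒫` with `1 < q⁻ ≤ q⁺ < ∞` and `α` measurable. Then for every
double sequence `λ`,
`‖λ‖_{b̃^{-α(·),q'(·)}_{q'(·),q'(·)}} ≤ ‖λ‖'_{b̃^{-α(·),q'(·)}_{q'(·),q'(·)}} ≤ 2‖λ‖_{b̃^{-α(·),q'(·)}_{q'(·),q'(·)}}`. -/
theorem statement11 (n : ℕ) (hn : 1 ≤ n) (q α : Rn n → ℝ)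
    (hqmeas : Measurable q) (hαmeas : Measurable α)
    (hq1 : ∀ x, 1 ≤ q x)
    (qm qM : ℝ) (hqm : 1 < qm)
    (hq : ∀ᵐ x ∂(volume : Measure (Rn n)), qm ≤ q x ∧ q x ≤ qM) :
    ∀ lam : ℕ → (Fin n → ℤ) → ℂ,
      btNorm n (fun x => q x / (q x - 1)) (fun x => -α x) lam ≤ conjNorm n q α lam ∧
        conjNorm n q α lam ≤ 2 * btNorm n (fun x => q x / (q x - 1)) (fun x => -α x) lam := by
  intro lam
  refine ⟨le_of_forall_gt_imp_ge_of_dense fun μ hμ => ?_,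
    conjNorm_le n q α hqmeas hαmeas hq1 (hq.mono fun x hx => by linarith [hx.1]) lam⟩
  rcases eq_or_ne μ ∞ with hT | hT
  · simp [hT]
  have hμ0 : 0 < μ.toReal := ENNReal.toReal_pos (zero_le.trans_lt hμ).ne' hT
  rw [← ENNReal.ofReal_toReal hT] at hμ ⊢
  exact btNorm_le_ofReal hqmeas hαmeas hq1 hqm (hq.mono fun x hx => hx.1) hμ0 hμ.le

end
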